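/- Let Γ be a group, ω: Γ × Γ → Γ a group homomorphism, h ∈ Γ, and b: {0,1}* → Γ a map satisfying b(u) = h · ω(b(u·0), b(u·1)) for all u ∈ {0,1}*. Let ω' := ad(h) ∘ ω, i.e. ω'(g₁, g₂) = h · ω(g₁, g₂) · h⁻¹. Then the map θ: K(ω) → K(ω') defined by θ(a)(u) := b(u) · a(u) · b(u)⁻¹ for all u ∈ {0,1}* is a well-defined group isomorphism. -/

import Mathlib

/-- `K(ω)`: the subgroup of the product group of `Γ`-valued functions on `{0,1}*`
(pointwise multiplication) consisting of the `a : {0,1}* → Γ` with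
`a u = ω (a (u·0), a (u·1))` for all `u`. -/
def Kgrp {Γ : Type*} [Group Γ] (ω : Γ × Γ →* Γ) : Subgroup (List Bool → Γ) where
  carrier := {a | ∀ u : List Bool, a u = ω (a (u ++ [false]), a (u ++ [true]))}
  mul_mem' := by
    intro a b ha hb u
    simp only [Pi.mul_apply]
    rw [ha u, hb u, ← map_mul, Prod.mk_mul_mk]
  one_mem' := by
    intro u
    simp only [Pi.one_apply]
    rw [show ((1 : Γ), (1 : Γ)) = (1 : Γ × Γ) from rfl, map_one]
  inv_mem' := by
    intro a ha u
    simp only [Pi.inv_apply]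
    rw [ha u, ← map_inv, Prod.inv_mk]

/-- The `i`-th component `Rᵢ(ω) : K(ω) → K(ω)` of `R(ω)`: prepend the letter `i`. -/
def Rcomp {Γ : Type*} [Group Γ] (ω : Γ × Γ →* Γ) (i : Bool) (a : Kgrp ω) : Kgrp ω :=
  ⟨fun u => (a : List Bool → Γ) (i :: u), fun u => a.2 (i :: u)⟩

/-- `R(ω) : K(ω) → K(ω) × K(ω)`, given by deleting a caret at the bottom:
`R(ω)(a) = (a₀, a₁)` with `aᵢ(u) = a(i·u)`. -/
def Rmap {Γ : Type*} [Group Γ] (ω : Γ × Γ →* Γ) (a : Kgrp ω) : Kgrp ω × Kgrp ω :=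
  (Rcomp ω false a, Rcomp ω true a)

/-!
Since `b u = h * ω (b (u·0), b (u·1))`, applying `ad(h) ∘ ω` to the conjugates by `b (u·0)` and
`b (u·1)` of two elements amounts to applying `ω` to the elements themselves and conjugating the
result by `b u`. Conjugation by `b`, an automorphism of the whole group of functions, therefore
turns the equation defining `K(ω)` at `u` into the one defining `K(ad(h) ∘ ω)` at `u`, reversibly.
-/

theorem conj_map_conj {G H : Type*} [Group G] [Group H] (φ : G →* H) (h : H) (g x : G) :
    MulAut.conj h (φ (MulAut.conj g x)) = MulAut.conj (h * φ g) (φ x) := by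
  simp only [map_mul, MulAut.mul_apply, MulAut.conj_apply, map_inv]

namespace Kgrp

variable {Γ : Type*} [Group Γ] {ω : Γ × Γ →* Γ}

theorem mem_iff {a : List Bool → Γ} :
    a ∈ Kgrp ω ↔ ∀ u, a u = ω (a (u ++ [false]), a (u ++ [true])) :=
  Iff.rfl

variable {h : Γ} {b : List Bool → Γ}

theorem conj_mem_iff (hb : ∀ u, b u = h * ω (b (u ++ [false]), b (u ++ [true])))
    {a : List Bool → Γ} :
    MulAut.conj b a ∈ Kgrp ((MulAut.conj h).toMonoidHom.comp ω) ↔ a ∈ Kgrp ω := by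
  rw [mem_iff, mem_iff]
  refine forall_congr' fun u => ?_
  have conj_children :
      MulAut.conj h (ω (MulAut.conj b a (u ++ [false]), MulAut.conj b a (u ++ [true]))) =
        MulAut.conj (b u) (ω (a (u ++ [false]), a (u ++ [true]))) := by
    rw [hb u]
    exact conj_map_conj ω h (b (u ++ [false]), b (u ++ [true]))
      (a (u ++ [false]), a (u ++ [true]))
  calc MulAut.conj b a u =
        MulAut.conj h (ω (MulAut.conj b a (u ++ [false]), MulAut.conj b a (u ++ [true])))
      ↔ MulAut.conj (b u) (a u) =
        MulAut.conj (b u) (ω (a (u ++ [false]), a (u ++ [true]))) := by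
        rw [conj_children]; rfl
    _ ↔ a u = ω (a (u ++ [false]), a (u ++ [true])) := (MulAut.conj (b u)).apply_eq_iff_eq

theorem map_conj (hb : ∀ u, b u = h * ω (b (u ++ [false]), b (u ++ [true]))) :
    (Kgrp ω).map (MulAut.conj b).toMonoidHom = Kgrp ((MulAut.conj h).toMonoidHom.comp ω) := by
  ext c
  obtain ⟨a, rfl⟩ := (MulAut.conj b).surjective c
  exact (Subgroup.mem_map_iff_mem (MulAut.conj b).injective).trans (conj_mem_iff hb).symm

/-- The isomorphism `θ : K(ω) ≃ K(ad(h) ∘ ω)`, `θ(a)(u) = b u * a u * (b u)⁻¹`, obtained by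
restricting the inner automorphism by `b` of the group of all functions `{0,1}* → Γ`. -/
def conjEquiv (hb : ∀ u, b u = h * ω (b (u ++ [false]), b (u ++ [true]))) :
    Kgrp ω ≃* Kgrp ((MulAut.conj h).toMonoidHom.comp ω) :=
  ((MulAut.conj b).subgroupMap (Kgrp ω)).trans (MulEquiv.subgroupCongr (map_conj hb))

end Kgrp

/-- given `h ∈ Γ` and `b : {0,1}* → Γ` with
`b u = h · ω (b (u·0), b (u·1))`, and `ω' := ad(h) ∘ ω`, the map
`θ : K(ω) → K(ω')`, `θ(a)(u) = b u · a u · (b u)⁻¹`, is a well-defined group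
isomorphism. -/
theorem stmt5 {Γ : Type*} [Group Γ] (ω : Γ × Γ →* Γ) (h : Γ) (b : List Bool → Γ)
    (hb : ∀ u : List Bool, b u = h * ω (b (u ++ [false]), b (u ++ [true])))
    (ω' : Γ × Γ →* Γ)
    (hω' : ∀ g₁ g₂ : Γ, ω' (g₁, g₂) = h * ω (g₁, g₂) * h⁻¹) :
    (∀ a : Kgrp ω, (fun u => b u * (a : List Bool → Γ) u * (b u)⁻¹) ∈ Kgrp ω') ∧
    ∃ θ : Kgrp ω ≃* Kgrp ω',
      ∀ (a : Kgrp ω) (u : List Bool),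
        (θ a : List Bool → Γ) u = b u * (a : List Bool → Γ) u * (b u)⁻¹ := by
  obtain rfl : ω' = (MulAut.conj h).toMonoidHom.comp ω := MonoidHom.ext fun g => hω' g.1 g.2
  exact ⟨fun a => (Kgrp.conj_mem_iff hb).2 a.2, Kgrp.conjEquiv hb, fun _ _ => rfl⟩
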